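/- arXiv:2509.06895 — 5 statements merged into one kernel-verified Lean document; each statement's English description precedes it below -/
import Mathlib

section
/- Let f : R → S be an injective homomorphism of commutative Noetherian rings. Then for every associated prime P of R there exists an associated prime Q of S such that the preimage f⁻¹(Q) equals P. -/
/-- If `f : R → S` is an injective homomorphism of commutative Noetherian rings, then
every associated prime `P` of `R` is the contraction of some associated prime `Q` of `S`. -/
theorem associated_prime_lifts_along_injective
    {R S : Type*} [CommRing R] [CommRing S]
    [IsNoetherianRing R] [IsNoetherianRing S]
    (f : R →+* S) (hf : Function.Injective f)
    (P : Ideal R) (hP : P ∈ associatedPrimes R R) :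
    ∃ Q ∈ associatedPrimes S S, Q.comap f = P := by
  obtain ⟨hp, x, hx⟩ := isAssociatedPrime_iff.mp hP
  have hc : Ideal.comap f ((⊥ : Submodule S S).colon {f x}) = P := by
    rw [hx]
    ext r
    rw [Ideal.mem_comap, Submodule.mem_colon_singleton, Submodule.mem_colon_singleton,
      Submodule.mem_bot, Submodule.mem_bot, smul_eq_mul, smul_eq_mul, ← map_mul,
      map_eq_zero_iff f hf]
  obtain ⟨Q, hQ, hQP⟩ := Ideal.exists_minimalPrimes_comap_eq f
    (I := (⊥ : Submodule S S).colon {f x}) P (by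
      rw [hc, Ideal.minimalPrimes_eq_subsingleton_self]; rfl)
  exact ⟨Q, isAssociatedPrime_iff.mpr
    ⟨hQ.1.1, Submodule.exists_eq_colon_of_mem_minimalPrimes hQ⟩, hQP⟩
end

section
/- Let R be a commutative Noetherian ring and P a prime ideal of R containing every zero divisor of R. Let U be a subset of R whose annihilator I = {a ∈ R : a·u = 0 for all u ∈ U} satisfies I ⊆ P. If P is a minimal prime over I (that is, P is minimal among prime ideals containing I), then there exists an integer s ≥ 1 with P^s ⊆ I, and consequently the radical of I equals P. -/
/-- In a commutative Noetherian ring, if a prime `P` contains every zero divisor, contains the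
annihilator `I` of a subset `U`, and is a minimal prime over `I`, then some power of `P` lies in
`I` and consequently `rad I = P`. -/
theorem pow_le_annihilator_of_minimal_prime
    {R : Type*} [CommRing R] [IsNoetherianRing R] (P : Ideal R) [P.IsPrime]
    (hP : ∀ a b : R, b ≠ 0 → a * b = 0 → a ∈ P)
    (U : Set R) (I : Ideal R) (hI : ∀ a : R, a ∈ I ↔ ∀ u ∈ U, a * u = 0)
    (hIP : I ≤ P) (hmin : P ∈ I.minimalPrimes) :
    (∃ s : ℕ, 1 ≤ s ∧ P ^ s ≤ I) ∧ I.radical = P := by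
  have hQ : ∀ Q ∈ I.minimalPrimes, Q ≤ P := by
    intro Q hQ x hx
    obtain ⟨y, hy, hxy⟩ := Ideal.exists_mul_mem_of_mem_minimalPrimes hQ hx
    rw [hI] at hy hxy
    push Not at hy
    obtain ⟨u, hu, hyu⟩ := hy
    exact hP x (y * u) hyu (by rw [← mul_assoc]; exact hxy u hu)
  have hrad : I.radical = P := by
    rw [← Ideal.sInf_minimalPrimes]
    exact le_antisymm (sInf_le hmin) (le_sInf fun Q h => hmin.2 h.1 (hQ Q h))
  refine ⟨?_, hrad⟩
  obtain ⟨n, hn⟩ := Ideal.exists_pow_le_of_le_radical_of_fg hrad.ge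
    (IsNoetherian.noetherian P)
  exact ⟨n + 1, Nat.le_add_left 1 n, (Ideal.pow_le_pow_right (Nat.le_succ n)).trans hn⟩
end

section
/- Let f : R → S be a homomorphism of commutative rings that makes S into a finitely generated R-module, and let y ∈ R with f(y) ≠ 0. Then the Krull dimension of S/ann_S(f(y)) is at most the Krull dimension of R/ann_R(y), where ann_S(f(y)) = {s ∈ S : s·f(y) = 0} and ann_R(y) = {a ∈ R : a·y = 0}. -/
/-- If `S` is a finitely generated module over `R` via `f = algebraMap R S` and `y ∈ R` has
`f y ≠ 0`, then `dim S/ann_S(f y) ≤ dim R/ann_R(y)`. -/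
theorem ringKrullDim_quotient_annihilator_le
    {R S : Type*} [CommRing R] [CommRing S] [Algebra R S] [Module.Finite R S]
    (y : R) (hy : algebraMap R S y ≠ 0)
    (JS : Ideal S) (hJS : ∀ s : S, s ∈ JS ↔ s * algebraMap R S y = 0)
    (JR : Ideal R) (hJR : ∀ a : R, a ∈ JR ↔ a * y = 0) :
    ringKrullDim (S ⧸ JS) ≤ ringKrullDim (R ⧸ JR) := by
  have hle : JR ≤ JS.comap (algebraMap R S) := by
    intro a ha
    rw [Ideal.mem_comap, hJS, ← map_mul, (hJR a).1 ha, map_zero]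
  let g : (R ⧸ JR) →+* (S ⧸ JS) := Ideal.quotientMap JS (algebraMap R S) hle
  let _ := g.toAlgebra
  have : Algebra.IsIntegral (R ⧸ JR) (S ⧸ JS) := by
    refine ⟨fun x => ?_⟩
    obtain ⟨s, rfl⟩ := Ideal.Quotient.mk_surjective x
    obtain ⟨p, hp, h0⟩ := Algebra.IsIntegral.isIntegral (R := R) s
    refine ⟨p.map (Ideal.Quotient.mk JR), hp.map _, ?_⟩
    rw [Polynomial.eval₂_map]
    have : (algebraMap (R ⧸ JR) (S ⧸ JS)).comp (Ideal.Quotient.mk JR)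
        = (Ideal.Quotient.mk JS).comp (algebraMap R S) := by
      ext a; rfl
    rw [this, ← Polynomial.hom_eval₂, h0, map_zero]
  refine Order.krullDim_le_of_strictMono
    (PrimeSpectrum.comap (algebraMap (R ⧸ JR) (S ⧸ JS))) ?_
  intro p q hpq
  exact Ideal.IsIntegral.comap_lt_comap (R := R ⧸ JR) (I := p.asIdeal) (J := q.asIdeal) hpq
end

section
/- Let k be a field and R a finitely generated commutative k-algebra. If p ⊆ q are prime ideals of R such that the Krull dimension of R/p equals the Krull dimension of R/q, then p = q. -/
/-- In a finitely generated commutative algebra over a field, nested primes with quotients of the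
same Krull dimension coincide. -/
theorem prime_eq_of_le_of_ringKrullDim_quotient_eq
    {k R : Type*} [Field k] [CommRing R] [Algebra k R] [Algebra.FiniteType k R]
    (p q : Ideal R) [p.IsPrime] [q.IsPrime] (hpq : p ≤ q)
    (hdim : ringKrullDim (R ⧸ p) = ringKrullDim (R ⧸ q)) :
    p = q := by
  by_contra hne
  obtain ⟨x, hxq, hxp⟩ := SetLike.exists_of_lt (lt_of_le_of_ne hpq hne)
  have h1 : ringKrullDim (R ⧸ q) + 1 ≤ ringKrullDim (R ⧸ p) := by
    refine ringKrullDim_succ_le_of_surjective (Ideal.Quotient.factor hpq)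
      (Ideal.Quotient.factor_surjective hpq) (r := Ideal.Quotient.mk p x) ?_ ?_
    · rw [mem_nonZeroDivisors_iff_ne_zero]
      rwa [Ne, Ideal.Quotient.eq_zero_iff_mem]
    · rw [Ideal.Quotient.factor_mk]
      exact Ideal.Quotient.eq_zero_iff_mem.mpr hxq
  obtain ⟨n, f, hf⟩ := Algebra.FiniteType.iff_quotient_mvPolynomial''.mp
    (inferInstance : Algebra.FiniteType k R)
  have h2 : ringKrullDim (R ⧸ q) ≤ n := by
    have h := ringKrullDim_le_of_surjective ((Ideal.Quotient.mk q).comp f.toRingHom)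
      (Ideal.Quotient.mk_surjective.comp hf)
    rwa [MvPolynomial.ringKrullDim_of_isNoetherianRing, ringKrullDim_eq_zero_of_field,
      zero_add, Nat.card_eq_fintype_card, Fintype.card_fin] at h
  have h3 : 0 ≤ ringKrullDim (R ⧸ q) := ringKrullDim_nonneg_of_nontrivial
  rw [hdim] at h1
  generalize ringKrullDim (R ⧸ q) = d at h1 h2 h3
  induction d with
  | bot => simp at h3
  | coe d =>
    induction d with
    | top => exact absurd h2 (by exact not_le_of_gt (by exact_mod_cast ENat.coe_lt_top n))
    | coe d =>
      have : d + 1 ≤ d := by exact_mod_cast h1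
      omega
end

section
/- Let k be a field and R a finitely generated commutative k-algebra. Let P be a prime ideal of R containing every zero divisor of R, let y ∈ R be a nonzero element with annihilator J = ann_R(y) = {a ∈ R : a·y = 0}, and suppose J ⊆ P and the Krull dimension of R/J equals the Krull dimension of R/P. Then the radical of J equals P. -/
/-- Let `R` be a finitely generated commutative algebra over a field `k`, `P` a prime ideal
containing every zero divisor of `R`, and `y ≠ 0` with annihilator `J ⊆ P` such that
`dim R/J = dim R/P`.  Then `rad J = P`. -/
theorem radical_annihilator_eq_prime
    {k R : Type*} [Field k] [CommRing R] [Algebra k R] [Algebra.FiniteType k R]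
    (P : Ideal R) [P.IsPrime]
    (hP : ∀ a b : R, b ≠ 0 → a * b = 0 → a ∈ P)
    (y : R) (hy : y ≠ 0)
    (J : Ideal R) (hJ : ∀ a : R, a ∈ J ↔ a * y = 0)
    (hJP : J ≤ P)
    (hdim : ringKrullDim (R ⧸ J) = ringKrullDim (R ⧸ P)) :
    J.radical = P := by
  have hQ : ∀ Q ∈ J.minimalPrimes, Q = P := by
    intro Q hQ
    have hQprime : Q.IsPrime := hQ.1.1
    have hQP : Q ≤ P := by
      intro a ha
      obtain ⟨b, hb, hab⟩ := Ideal.exists_mul_mem_of_mem_minimalPrimes hQ ha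
      refine hP a (b * y) (fun h => hb ((hJ b).2 h)) ?_
      rw [← mul_assoc]
      exact (hJ _).1 hab
    by_contra hne
    obtain ⟨r, hrP, hrQ⟩ := SetLike.exists_of_lt (lt_of_le_of_ne hQP hne)
    have h1 : ringKrullDim (R ⧸ P) + 1 ≤ ringKrullDim (R ⧸ Q) := by
      refine ringKrullDim_succ_le_of_surjective (Ideal.Quotient.factor hQP)
        (Ideal.Quotient.factor_surjective hQP) (r := Ideal.Quotient.mk Q r) ?_ ?_
      · refine mem_nonZeroDivisors_of_ne_zero ?_
        rwa [Ne, Ideal.Quotient.eq_zero_iff_mem]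
      · rw [Ideal.Quotient.factor_mk]
        exact Ideal.Quotient.eq_zero_iff_mem.2 hrP
    have h2 : ringKrullDim (R ⧸ Q) ≤ ringKrullDim (R ⧸ J) :=
      ringKrullDim_le_of_surjective (Ideal.Quotient.factor hQ.1.2)
        (Ideal.Quotient.factor_surjective hQ.1.2)
    obtain ⟨n, f, hf⟩ := Algebra.FiniteType.iff_quotient_mvPolynomial''.mp
      (inferInstance : Algebra.FiniteType k R)
    have h3 : ringKrullDim (R ⧸ P) ≤ (n : ℕ) := by
      refine (ringKrullDim_quotient_le P).trans
        ((ringKrullDim_le_of_surjective f.toRingHom hf).trans ?_)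
      rw [MvPolynomial.ringKrullDim_of_isNoetherianRing]
      simp
    have h4 : 0 ≤ ringKrullDim (R ⧸ P) := ringKrullDim_nonneg_of_nontrivial
    have h5 : ringKrullDim (R ⧸ P) + 1 ≤ ringKrullDim (R ⧸ P) := h1.trans (h2.trans hdim.le)
    generalize ringKrullDim (R ⧸ P) = d at h3 h4 h5
    induction d with
    | bot => simp at h4
    | coe d =>
      induction d with
      | top => exact absurd h3 (by exact not_le.2 (WithBot.coe_lt_coe.2 (ENat.coe_lt_top n)))
      | coe d =>
        have : d + 1 ≤ d := by exact_mod_cast h5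
        omega
  rw [← Ideal.sInf_minimalPrimes]
  apply le_antisymm
  · obtain ⟨Q, hQm, -⟩ := Ideal.exists_minimalPrimes_le hJP
    have := hQ Q hQm
    subst this
    exact sInf_le hQm
  · exact le_sInf fun Q h => (hQ Q h).ge
end
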